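/- arXiv:2410.11296 — 2 statements merged into one kernel-verified Lean document; each statement's English description precedes it below -/
import Mathlib

section
/- Let M ≥ 1 players have action sets A_j = [a_j, b_j] ⊆ ℝ (nonempty compact intervals) and payoff functions J_j : ∏_{k=1}^M A_k → ℝ. Suppose each J_j is continuous on ∏_k A_k, and for each j and each fixed choice of the other players' actions y_{−j}, the function y_j ↦ J_j(y_j, y_{−j}) is quasiconcave on A_j. Then the game has a pure Nash equilibrium: there exists y* ∈ ∏_k A_k such that for every j and every y_j ∈ A_j, J_j(y*) ≥ J_j(y_j, y*_{−j}). -/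
/-!
For a quasiconcave game the best responses of each player form an interval, and the graph of the
best-response correspondence is compact, so an equilibrium is a fixed point of an interval-valued
correspondence. Let `U j` (resp. `V j`) be the closed set of profiles `y` admitting a best response
of player `j` which is at least (resp. at most) `y j`. These two sets cover the box, and they
contain the faces `y j = a j` and `y j = b j` respectively; a point lying in all of them is fixed,
since a best response below `y j` and one above it make `y j` itself a best response.

Such a point exists by compactness as soon as, on arbitrarily fine grids, some small cube meets all
the sets. Subdivide every grid cube into Kuhn simplices and sum, with the signs of the permutations,
the products `∏ i, (f i (v (i + 1)) - f i (v i))` over their vertices `v`, for integer functions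
`f i`. This product is a cup product of coboundaries, hence a coboundary, so the facets interior to
the grid cancel and induction on the dimension shows that the sum depends only on the values of
`f i` on the faces `x i = 0` and `x i = n i`. For indicator functions of sets containing the former
faces and missing the latter, it equals `1`, so one of the products is nonzero.
-/

section Coboundary

open Finset

variable {X R : Type*} [CommRing R]

/-- The cup product of the coboundaries of the functions `f i`, regarded as `0`-cochains, evaluated
on the ordered simplex with vertices `v 0, …, v m`. -/
def cupCoboundary {m : ℕ} (f : Fin m → X → R) (v : Fin (m + 1) → X) : R :=
  ∏ i, (f i (v i.succ) - f i (v i.castSucc))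

lemma cupCoboundary_cons {m : ℕ} (g : X → R) (f : Fin m → X → R) (v : Fin (m + 2) → X) :
    cupCoboundary (Fin.cons g f : Fin (m + 1) → X → R) v =
      (g (v 1) - g (v 0)) * cupCoboundary f (Fin.tail v) := by
  simp [cupCoboundary, Fin.prod_univ_succ, Fin.tail]

lemma cupCoboundary_eq_zero {m : ℕ} {f : Fin m → X → R} {v : Fin (m + 1) → X} {i : Fin m} {c : R}
    (h : ∀ k, f i (v k) = c) : cupCoboundary f v = 0 :=
  Finset.prod_eq_zero (mem_univ i) (by rw [h, h, sub_self])

lemma comp_succAbove_zero {m : ℕ} (v : Fin (m + 2) → X) : v ∘ Fin.succAbove 0 = Fin.tail v := by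
  funext i
  simp [Fin.tail]

lemma comp_succAbove_succ {m : ℕ} (v : Fin (m + 2) → X) (k : Fin (m + 1)) :
    v ∘ k.succ.succAbove = Fin.cons (v 0) (Fin.tail v ∘ k.succAbove) := by
  funext i
  cases i using Fin.cases <;> simp [Fin.tail]

lemma sum_facets_mul_cupCoboundary_of_closed {m : ℕ} (g : X → R) (f : Fin m → X → R)
    (v : Fin (m + 2) → X)
    (hf : ∑ k : Fin (m + 2), (-1) ^ (k : ℕ) * cupCoboundary f (v ∘ k.succAbove) = 0) :
    ∑ k : Fin (m + 2), (-1) ^ (k : ℕ) *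
        (g ((v ∘ k.succAbove) 0) * cupCoboundary f (v ∘ k.succAbove)) =
      cupCoboundary (Fin.cons g f : Fin (m + 1) → X → R) v := by
  rw [Fin.sum_univ_succ] at hf ⊢
  simp only [comp_succAbove_succ, Fin.cons_zero, comp_succAbove_zero] at hf ⊢
  simp only [mul_left_comm _ (g (v 0)), ← mul_sum, eq_neg_of_add_eq_zero_right hf,
    cupCoboundary_cons, Fin.tail, Fin.succ_zero_eq_one, Fin.val_zero]
  ring

lemma sum_facets_cupCoboundary_eq_zero {m : ℕ} (f : Fin m → X → R) (v : Fin (m + 2) → X) :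
    ∑ k : Fin (m + 2), (-1) ^ (k : ℕ) * cupCoboundary f (v ∘ k.succAbove) = 0 := by
  induction m with
  | zero => simp [cupCoboundary, Fin.sum_univ_two]
  | succ m ih =>
    obtain ⟨g, f, rfl⟩ : ∃ g f', f = Fin.cons g f' := ⟨f 0, Fin.tail f, by simp⟩
    have hclosed := ih f (Fin.tail v)
    have hleibniz := sum_facets_mul_cupCoboundary_of_closed g f (Fin.tail v) hclosed
    have hsum : ∑ k : Fin (m + 2), (-1) ^ (k.succ : ℕ) *
        cupCoboundary (Fin.cons g f : Fin (m + 1) → X → R) (v ∘ k.succ.succAbove) =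
        g (v 0) * ∑ k : Fin (m + 2), (-1) ^ (k : ℕ) * cupCoboundary f (Fin.tail v ∘ k.succAbove) -
          ∑ k : Fin (m + 2), (-1) ^ (k : ℕ) *
            (g ((Fin.tail v ∘ k.succAbove) 0) * cupCoboundary f (Fin.tail v ∘ k.succAbove)) := by
      rw [mul_sum, ← sum_sub_distrib]
      refine sum_congr rfl fun k _ => ?_
      rw [comp_succAbove_succ, cupCoboundary_cons, Fin.cons_zero, Fin.cons_one, Fin.tail_cons,
        Fin.val_succ]
      ring
    rw [Fin.sum_univ_succ, hsum, hclosed, hleibniz, comp_succAbove_zero]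
    simp

lemma sum_facets_mul_cupCoboundary {m : ℕ} (g : X → R) (f : Fin m → X → R)
    (v : Fin (m + 2) → X) :
    ∑ k : Fin (m + 2), (-1) ^ (k : ℕ) *
        (g ((v ∘ k.succAbove) 0) * cupCoboundary f (v ∘ k.succAbove)) =
      cupCoboundary (Fin.cons g f : Fin (m + 1) → X → R) v :=
  sum_facets_mul_cupCoboundary_of_closed g f v (sum_facets_cupCoboundary_eq_zero f v)

end Coboundary

section Cube

open Finset Equiv

/-- The vertices of the simplex of Kuhn's triangulation of the cube `Set.Icc q (q + 1)` given by the
permutation `τ`. They descend from `q + 1` to `q`: the step from vertex `i` to vertex `i + 1` lowers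
the coordinate `τ.symm i`. -/
def kuhnSimplex {M : ℕ} (q : Fin M → ℕ) (τ : Perm (Fin M)) (i : Fin (M + 1)) : Fin M → ℕ :=
  fun j => q j + if i ≤ (τ j).castSucc then 1 else 0

lemma kuhnSimplex_mem_Icc {M : ℕ} (q : Fin M → ℕ) (τ : Perm (Fin M)) (i : Fin (M + 1)) :
    kuhnSimplex q τ i ∈ Set.Icc q (q + 1) := by
  refine ⟨fun j => ?_, fun j => ?_⟩ <;> simp only [kuhnSimplex, Pi.add_apply, Pi.one_apply] <;>
    split_ifs <;> omega

variable {m : ℕ}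

lemma kuhnSimplex_succ_apply_symm_zero (q : Fin (m + 1) → ℕ) (τ : Perm (Fin (m + 1)))
    (i : Fin (m + 1)) : kuhnSimplex q τ i.succ (τ.symm 0) = q (τ.symm 0) := by
  simp [kuhnSimplex]

-- Dropping the last vertex of a simplex leaves the facet opposite to the first vertex of a simplex
-- in an adjacent cube.
lemma kuhnSimplex_castSucc (q : Fin (m + 1) → ℕ) (τ : Perm (Fin (m + 1))) (i : Fin (m + 1)) :
    kuhnSimplex q τ i.castSucc =
      kuhnSimplex (q + Pi.single (τ.symm (Fin.last m)) 1) (finRotate (m + 1) * τ) i.succ := by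
  funext j
  rcases eq_or_ne (τ j) (Fin.last m) with h | h
  · have hj : τ.symm (Fin.last m) = j := by rw [← h]; simp
    simp [kuhnSimplex, h, hj, Fin.le_last]
  · have hj : j ≠ τ.symm (Fin.last m) := by rintro rfl; simp at h
    simp only [kuhnSimplex, Pi.add_apply, Pi.single_eq_of_ne hj, add_zero, Fin.le_def,
      Perm.mul_apply, Fin.val_castSucc, Fin.val_succ, coe_finRotate_of_ne_last h,
      add_le_add_iff_right]

lemma kuhnSimplex_swap (q : Fin (m + 1) → ℕ) (τ : Perm (Fin (m + 1))) (i : Fin m) :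
    kuhnSimplex q (swap i.castSucc i.succ * τ) ∘ (i.succ.castSucc).succAbove =
      kuhnSimplex q τ ∘ (i.succ.castSucc).succAbove := by
  funext k j
  have hk : (i.succ.castSucc).succAbove k ≠ i.succ.castSucc := Fin.succAbove_ne _ _
  simp only [Function.comp_apply, kuhnSimplex, Perm.mul_apply]
  generalize (i.succ.castSucc).succAbove k = t at hk
  congr 2
  simp only [swap_apply_def, Fin.le_def, Fin.ext_iff, ne_eq] at hk ⊢
  split_ifs <;> simp_all <;> omega

lemma sum_sign_smul_interior_facet {A : Type*} [AddCommGroup A]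
    (F : (Fin (m + 1) → Fin (m + 1) → ℕ) → A) (q : Fin (m + 1) → ℕ) (i : Fin m) :
    ∑ τ : Perm (Fin (m + 1)),
      Perm.sign τ • F (kuhnSimplex q τ ∘ (i.succ.castSucc).succAbove) = 0 := by
  have hne : i.castSucc ≠ i.succ := Fin.castSucc_lt_succ.ne
  -- Exchanging the two adjacent steps around an interior vertex reverses the sign of `τ`.
  refine sum_involution (fun τ _ => swap i.castSucc i.succ * τ) (fun τ _ => ?_)
    (fun τ _ _ => ?_) (fun _ _ => mem_univ _) (fun τ _ => swap_mul_self_mul _ _ τ)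
  · rw [kuhnSimplex_swap, Perm.sign_mul, Perm.sign_swap hne, neg_one_mul, Units.neg_smul,
      add_neg_cancel]
  · simpa [swap_eq_one_iff] using hne

lemma sum_sign_smul_last_facet {A : Type*} [AddCommGroup A]
    (F : (Fin (m + 1) → Fin (m + 1) → ℕ) → A) (q : Fin (m + 1) → ℕ) :
    ∑ τ : Perm (Fin (m + 1)), Perm.sign τ • F (kuhnSimplex q τ ∘ Fin.castSucc) =
      (-1 : ℤˣ) ^ m • ∑ τ : Perm (Fin (m + 1)),
        Perm.sign τ • F (kuhnSimplex (q + Pi.single (τ.symm 0) 1) τ ∘ Fin.succ) := by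
  rw [smul_sum]
  conv_rhs => rw [← Equiv.sum_comp (Equiv.mulLeft (finRotate (m + 1)))]
  refine sum_congr rfl fun τ _ => ?_
  have hsymm : (finRotate (m + 1) * τ).symm 0 = τ.symm (Fin.last m) := by
    rw [symm_apply_eq, Perm.mul_apply, apply_symm_apply, finRotate_last]
  have hfacet : kuhnSimplex q τ ∘ Fin.castSucc =
      kuhnSimplex (q + Pi.single (τ.symm (Fin.last m)) 1) (finRotate (m + 1) * τ) ∘ Fin.succ :=
    funext fun i => kuhnSimplex_castSucc q τ i
  rw [coe_mulLeft, hsymm, hfacet, smul_smul, Perm.sign_mul, sign_finRotate, add_tsub_cancel_right,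
    ← mul_assoc, ← mul_pow, neg_one_mul, neg_neg, one_pow, one_mul]

lemma sum_sign_smul_boundary {R : Type*} [CommRing R]
    (F : (Fin (m + 1) → Fin (m + 1) → ℕ) → R) (q : Fin (m + 1) → ℕ) :
    ∑ τ : Perm (Fin (m + 1)), Perm.sign τ •
        ∑ k : Fin (m + 2), (-1) ^ (k : ℕ) * F (kuhnSimplex q τ ∘ k.succAbove) =
      ∑ τ : Perm (Fin (m + 1)), Perm.sign τ • (F (kuhnSimplex q τ ∘ Fin.succ) -
        F (kuhnSimplex (q + Pi.single (τ.symm 0) 1) τ ∘ Fin.succ)) := by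
  have hswap : ∀ k : Fin (m + 2), ∑ τ : Perm (Fin (m + 1)),
      Perm.sign τ • ((-1) ^ (k : ℕ) * F (kuhnSimplex q τ ∘ k.succAbove)) =
      (-1) ^ (k : ℕ) * ∑ τ : Perm (Fin (m + 1)),
        Perm.sign τ • F (kuhnSimplex q τ ∘ k.succAbove) := fun k => by
    simp only [mul_sum, mul_smul_comm]
  simp only [smul_sum (s := univ (α := Fin (m + 2)))]
  rw [sum_comm]
  simp only [hswap]
  rw [Fin.sum_univ_castSucc, Fin.sum_univ_succ]
  simp only [sum_sign_smul_interior_facet, mul_zero, sum_const_zero, add_zero, Fin.castSucc_zero,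
    Fin.succAbove_last, Fin.succAbove_zero, sum_sign_smul_last_facet, smul_sub, sum_sub_distrib]
  rcases Nat.even_or_odd m with hm | hm <;> simp [hm.neg_one_pow, pow_succ, sub_eq_add_neg]

lemma sum_box_sub_shift {A : Type*} [AddCommGroup A] (n : Fin (m + 1) → ℕ) (j : Fin (m + 1))
    (h : (Fin (m + 1) → ℕ) → A) :
    ∑ q ∈ Fintype.piFinset fun i => range (n i), (h q - h (q + Pi.single j 1)) =
      ∑ q ∈ Fintype.piFinset fun i => range (n (j.succAbove i)),
        (h (j.insertNth 0 q) - h (j.insertNth (n j) q)) := by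
  have hshift : ∀ (t : ℕ) (q : Fin m → ℕ),
      (j.insertNth t q + Pi.single j 1 : Fin (m + 1) → ℕ) = j.insertNth (t + 1) q := by
    intro t q
    funext i
    cases i using Fin.succAboveCases j <;> simp
  rw [sum_equiv (Fin.insertNthEquiv (fun _ => ℕ) j).symm
    (t := range (n j) ×ˢ Fintype.piFinset fun i => range (n (j.succAbove i)))
    (g := fun p => h (j.insertNth p.1 p.2) - h (j.insertNth (p.1 + 1) p.2)), sum_product_right]
  · exact sum_congr rfl fun q _ => sum_range_sub' (fun t => h (j.insertNth t q)) (n j)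
  · intro q
    simp [Fin.forall_iff_succAbove j, Fin.removeNth]
  · intro q _
    rw [← hshift]
    simp

end Cube

section Degree

open Finset Equiv

variable {R : Type*} [CommRing R]

/-- The signed sum of `cupCoboundary f` over all simplices of Kuhn's triangulation of the grid
`Set.Icc 0 n`: a combinatorial degree of the map `f` on the box. -/
def gridDegree {M : ℕ} (f : Fin M → (Fin M → ℕ) → R) (n : Fin M → ℕ) : R :=
  ∑ q ∈ Fintype.piFinset fun j => range (n j), ∑ τ : Perm (Fin M),
    Perm.sign τ • cupCoboundary f (kuhnSimplex q τ)

lemma kuhnSimplex_decomposeFin_succ {m : ℕ} (q : Fin m → ℕ) (c : ℕ) (e : Perm (Fin m))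
    (i : Fin (m + 1)) :
    kuhnSimplex (Fin.cons c q : Fin (m + 1) → ℕ) (Perm.decomposeFin.symm (0, e)) i.succ =
      Fin.cons c (kuhnSimplex q e i) := by
  funext j
  cases j using Fin.cases <;> simp [kuhnSimplex, Fin.le_def]

lemma sum_sign_smul_face {m : ℕ} (f : Fin (m + 1) → (Fin (m + 1) → ℕ) → R) (n c : Fin (m + 1) → ℕ)
    (γ : Fin (m + 1) → R) (hf : ∀ j x, x j = c j → f j x = γ j) :
    ∑ τ : Perm (Fin (m + 1)), Perm.sign τ •
        ∑ q ∈ Fintype.piFinset fun i => range (n ((τ.symm 0).succAbove i)),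
          f 0 (kuhnSimplex ((τ.symm 0).insertNth (c (τ.symm 0)) q) τ (Fin.succ 0)) *
            cupCoboundary (Fin.tail f)
              (kuhnSimplex ((τ.symm 0).insertNth (c (τ.symm 0)) q) τ ∘ Fin.succ) =
      γ 0 * gridDegree (fun i y => f i.succ (Fin.cons (c 0) y)) (Fin.tail n) := by
  -- The facet lies in `x j = c j` for `j = τ.symm 0`; if `j ≠ 0`, then `f j` is constant on it and
  -- its term vanishes.
  rw [← Equiv.sum_comp Perm.decomposeFin.symm, Fintype.sum_prod_type, Fintype.sum_eq_single 0]
  · have hsymm : ∀ e : Perm (Fin m), (Perm.decomposeFin.symm ((0 : Fin (m + 1)), e)).symm 0 = 0 :=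
      fun e => by rw [symm_apply_eq]; simp
    have hcup : ∀ (e : Perm (Fin m)) (q : Fin m → ℕ),
        cupCoboundary (Fin.tail f)
          (kuhnSimplex (Fin.cons (c 0) q : Fin (m + 1) → ℕ) (Perm.decomposeFin.symm (0, e)) ∘
            Fin.succ) =
        cupCoboundary (fun i y => f i.succ (Fin.cons (c 0) y)) (kuhnSimplex q e) := fun e q => by
      simp only [cupCoboundary, Function.comp_apply, kuhnSimplex_decomposeFin_succ, Fin.tail]
    simp only [hsymm, Fin.insertNth_zero, hcup, kuhnSimplex_decomposeFin_succ, gridDegree]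
    rw [sum_comm, mul_sum]
    refine sum_congr rfl fun e _ => ?_
    simp [smul_sum, mul_sum, mul_smul_comm, hf 0, Perm.decomposeFin.symm_sign, Fin.tail]
  · intro p hp
    refine sum_eq_zero fun e _ => ?_
    set τ := Perm.decomposeFin.symm (p, e) with hτ
    obtain ⟨i, hi⟩ : ∃ i, Fin.succ i = τ.symm 0 := Fin.exists_succ_eq.2 fun h => hp (by
      rw [symm_apply_eq] at h
      simpa [hτ] using h.symm)
    refine (congrArg _ (sum_eq_zero fun q _ => ?_)).trans (smul_zero _)
    refine mul_eq_zero_of_right _ (cupCoboundary_eq_zero (i := i) (c := γ i.succ) fun k => ?_)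
    refine hf _ _ ?_
    rw [hi, Function.comp_apply, kuhnSimplex_succ_apply_symm_zero, Fin.insertNth_apply_same]

theorem gridDegree_eq_prod {M : ℕ} (f : Fin M → (Fin M → ℕ) → R) (n : Fin M → ℕ)
    (α β : Fin M → R)
    (hα : ∀ j x, x j = 0 → f j x = α j) (hβ : ∀ j x, x j = n j → f j x = β j) :
    gridDegree f n = ∏ j, (α j - β j) := by
  induction M with
  | zero => simp [gridDegree, cupCoboundary]
  | succ m ih =>
    have hface : ∀ c, gridDegree (fun i y => f i.succ (Fin.cons c y)) (Fin.tail n) =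
        ∏ i : Fin m, (α i.succ - β i.succ) := fun c =>
      ih _ _ _ _ (fun j y hy => hα j.succ _ hy) (fun j y hy => hβ j.succ _ hy)
    let F : (Fin (m + 1) → Fin (m + 1) → ℕ) → R := fun w => f 0 (w 0) * cupCoboundary (Fin.tail f) w
    have hcube : ∀ q : Fin (m + 1) → ℕ,
        ∑ τ : Perm (Fin (m + 1)), Perm.sign τ • cupCoboundary f (kuhnSimplex q τ) =
          ∑ τ : Perm (Fin (m + 1)), Perm.sign τ • (F (kuhnSimplex q τ ∘ Fin.succ) -
            F (kuhnSimplex (q + Pi.single (τ.symm 0) 1) τ ∘ Fin.succ)) := fun q => by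
      simp only [← sum_sign_smul_boundary F, F, sum_facets_mul_cupCoboundary, Fin.cons_self_tail]
    calc gridDegree f n
        = ∑ τ : Perm (Fin (m + 1)), Perm.sign τ •
            ∑ q ∈ Fintype.piFinset fun j => range (n j), (F (kuhnSimplex q τ ∘ Fin.succ) -
              F (kuhnSimplex (q + Pi.single (τ.symm 0) 1) τ ∘ Fin.succ)) := by
          simp only [gridDegree, hcube, smul_sum]
          exact sum_comm
      _ = ∑ τ : Perm (Fin (m + 1)), Perm.sign τ •
            ∑ q ∈ Fintype.piFinset fun i => range (n ((τ.symm 0).succAbove i)),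
              (F (kuhnSimplex ((τ.symm 0).insertNth 0 q) τ ∘ Fin.succ) -
                F (kuhnSimplex ((τ.symm 0).insertNth (n (τ.symm 0)) q) τ ∘ Fin.succ)) :=
          sum_congr rfl fun τ _ => congrArg _ <|
            sum_box_sub_shift n (τ.symm 0) fun q => F (kuhnSimplex q τ ∘ Fin.succ)
      _ = α 0 * ∏ i : Fin m, (α i.succ - β i.succ) -
            β 0 * ∏ i : Fin m, (α i.succ - β i.succ) := by
          simp only [sum_sub_distrib, smul_sub]
          exact congrArg₂ _ ((sum_sign_smul_face f n 0 α hα).trans (by rw [hface]))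
            ((sum_sign_smul_face f n n β hβ).trans (by rw [hface]))
      _ = ∏ j, (α j - β j) := by rw [Fin.prod_univ_succ, sub_mul]

/-- Kuhn's cubical lemma. -/
theorem exists_cube_meeting_sets_and_compls {M : ℕ} (n : Fin M → ℕ) (A : Fin M → Set (Fin M → ℕ))
    (h0 : ∀ j, ∀ x ≤ n, x j = 0 → x ∈ A j) (hn : ∀ j, ∀ x ≤ n, x j = n j → x ∉ A j) :
    ∃ q, q + 1 ≤ n ∧ ∀ j, (Set.Icc q (q + 1) ∩ A j).Nonempty ∧
      (Set.Icc q (q + 1) \ A j).Nonempty := by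
  classical
  let f : Fin M → (Fin M → ℕ) → ℤ := fun j x => (A j).indicator 1 (x ⊓ n)
  have hdegree : gridDegree f n = 1 := by
    rw [gridDegree_eq_prod f n 1 0 (fun j x hx => ?_) fun j x hx => ?_]
    · simp
    · exact Set.indicator_of_mem (h0 j _ inf_le_right (by simp [hx])) _
    · exact Set.indicator_of_notMem (hn j _ inf_le_right (by simp [hx])) _
  obtain ⟨q, hq, hq_ne⟩ := exists_ne_zero_of_sum_ne_zero (hdegree.trans_ne one_ne_zero)
  obtain ⟨τ, -, hτ⟩ := exists_ne_zero_of_sum_ne_zero hq_ne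
  have hqn : q + 1 ≤ n := fun j => Nat.succ_le_of_lt (mem_range.1 (Fintype.mem_piFinset.1 hq j))
  have hv := kuhnSimplex_mem_Icc q τ
  have hf : ∀ j i, f j (kuhnSimplex q τ i) = (A j).indicator 1 (kuhnSimplex q τ i) := fun j i => by
    simp only [f, inf_eq_left.2 ((hv i).2.trans hqn)]
  refine ⟨q, hqn, fun j => ?_⟩
  have hedge : f j (kuhnSimplex q τ j.succ) ≠ f j (kuhnSimplex q τ j.castSucc) := fun h =>
    hτ (by rw [cupCoboundary, prod_eq_zero (mem_univ j) (sub_eq_zero.2 h), smul_zero])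
  rw [hf, hf] at hedge
  by_cases hmem : kuhnSimplex q τ j.succ ∈ A j
  · exact ⟨⟨_, hv j.succ, hmem⟩, _, hv j.castSucc, fun h => hedge (by simp [hmem, h])⟩
  · exact ⟨⟨_, hv j.castSucc, by_contra fun h => hedge (by simp [hmem, h])⟩, _, hv j.succ, hmem⟩

end Degree

section FixedPoint

variable {M : ℕ} {a b : Fin M → ℝ}

/-- The point with index `x` in the grid dividing each edge of the box `Set.Icc a b` into `N` equal
parts. -/
noncomputable def gridPoint (a b : Fin M → ℝ) (N : ℕ) (x : Fin M → ℕ) : Fin M → ℝ :=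
  fun k => AffineMap.lineMap (a k) (b k) (x k / N : ℝ)

lemma gridPoint_mem_Icc (hab : a ≤ b) {N : ℕ} {x : Fin M → ℕ} (hx : x ≤ fun _ => N) :
    gridPoint a b N x ∈ Set.Icc a b := by
  rw [← Set.pi_univ_Icc]
  exact fun k _ => (convex_Icc (a k) (b k)).lineMap_mem (Set.left_mem_Icc.2 (hab k))
    (Set.right_mem_Icc.2 (hab k))
    ⟨by positivity, div_le_one_of_le₀ (by exact_mod_cast hx k) N.cast_nonneg⟩

lemma dist_gridPoint_le (a b : Fin M → ℝ) (N : ℕ) {q x : Fin M → ℕ} (hx : x ∈ Set.Icc q (q + 1)) :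
    dist (gridPoint a b N x) (gridPoint a b N q) ≤ dist a b / N := by
  refine (dist_pi_le_iff (by positivity)).2 fun k => ?_
  have hqx : (q k : ℝ) ≤ x k := by exact_mod_cast hx.1 k
  have hxq : (x k : ℝ) ≤ q k + 1 := by exact_mod_cast hx.2 k
  have hscale : dist (x k / N : ℝ) (q k / N) ≤ 1 / N := by
    rw [Real.dist_eq, ← sub_div, abs_of_nonneg (by bound)]
    gcongr
    linarith
  calc dist (gridPoint a b N x k) (gridPoint a b N q k)
      = dist (x k / N : ℝ) (q k / N) * dist (a k) (b k) := dist_lineMap_lineMap _ _ _ _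
    _ ≤ 1 / N * dist a b := by gcongr; exact dist_le_pi_dist a b k
    _ = dist a b / N := one_div_mul_eq_div _ _

lemma exists_ball_meeting_of_faces (hab : a ≤ b) {U V : Fin M → Set (Fin M → ℝ)}
    (hUV : ∀ j, Set.Icc a b ⊆ U j ∪ V j)
    (ha : ∀ j, ∀ y ∈ Set.Icc a b, y j = a j → y ∈ U j)
    (hb : ∀ j, ∀ y ∈ Set.Icc a b, y j = b j → y ∈ V j) {ε : ℝ} (hε : 0 < ε) :
    ∃ p ∈ Set.Icc a b, ∀ j,
      (Metric.ball p ε ∩ U j).Nonempty ∧ (Metric.ball p ε ∩ V j).Nonempty := by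
  obtain ⟨N, hN⟩ := exists_nat_gt (dist a b / ε)
  have hN0 : (0 : ℝ) < N := (by positivity : 0 ≤ dist a b / ε).trans_lt hN
  -- The far faces are removed by hand since `U j` may meet them.
  obtain ⟨q, hqN, hq⟩ := exists_cube_meeting_sets_and_compls (fun _ : Fin M => N)
    (fun j => {x | gridPoint a b N x ∈ U j ∧ x j ≠ N})
    (fun j x hx hxj => ⟨ha j _ (gridPoint_mem_Icc hab hx) (by simp [gridPoint, hxj]),
      by simpa only [hxj] using (Nat.cast_pos.1 hN0).ne⟩)
    (fun j x _ hxj hmem => hmem.2 hxj)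
  have hball : ∀ x ∈ Set.Icc q (q + 1), gridPoint a b N x ∈ Metric.ball (gridPoint a b N q) ε :=
    fun x hx => (dist_gridPoint_le a b N hx).trans_lt ((div_lt_comm₀ hε hN0).1 hN)
  refine ⟨gridPoint a b N q, gridPoint_mem_Icc hab ((le_add_of_nonneg_right zero_le_one).trans hqN),
    fun j => ?_⟩
  obtain ⟨⟨r, hr, hrU, -⟩, s, hs, hsU⟩ := hq j
  refine ⟨⟨_, hball r hr, hrU⟩, _, hball s hs, ?_⟩
  have hsbox := gridPoint_mem_Icc hab (hs.2.trans hqN)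
  by_cases hsN : s j = N
  · exact hb j _ hsbox (by simp [gridPoint, hsN, hN0.ne'])
  · exact (hUV j hsbox).resolve_left fun h => hsU ⟨h, hsN⟩

/-- The Poincaré–Miranda theorem, for closed covers. -/
theorem exists_mem_inter_of_faces (hab : a ≤ b) {U V : Fin M → Set (Fin M → ℝ)}
    (hU : ∀ j, IsClosed (U j)) (hV : ∀ j, IsClosed (V j))
    (hUV : ∀ j, Set.Icc a b ⊆ U j ∪ V j)
    (ha : ∀ j, ∀ y ∈ Set.Icc a b, y j = a j → y ∈ U j)
    (hb : ∀ j, ∀ y ∈ Set.Icc a b, y j = b j → y ∈ V j) :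
    ∃ y ∈ Set.Icc a b, ∀ j, y ∈ U j ∩ V j := by
  by_contra! hempty
  let c : Fin M ⊕ Fin M → Set (Fin M → ℝ) := Sum.elim (fun j => (U j)ᶜ) fun j => (V j)ᶜ
  have hopen : ∀ i, IsOpen (c i) :=
    Sum.rec (fun j => (hU j).isOpen_compl) fun j => (hV j).isOpen_compl
  have hcover : Set.Icc a b ⊆ ⋃ i, c i := fun y hy => by
    obtain ⟨j, hj⟩ := hempty y hy
    exact Set.mem_iUnion.2 <| (not_and_or.1 hj).elim (fun h => ⟨.inl j, h⟩) fun h => ⟨.inr j, h⟩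
  obtain ⟨δ, hδ, hball⟩ := lebesgue_number_lemma_of_metric isCompact_Icc hopen hcover
  obtain ⟨p, hp, hmeet⟩ := exists_ball_meeting_of_faces hab hUV ha hb hδ
  obtain ⟨j | j, hj⟩ := hball p hp
  · obtain ⟨y, hy, hyU⟩ := (hmeet j).1
    exact hj hy hyU
  · obtain ⟨y, hy, hyV⟩ := (hmeet j).2
    exact hj hy hyV

/-- Kakutani's fixed point theorem, for products of interval-valued correspondences. -/
theorem exists_mem_of_ordConnected (hab : a ≤ b) (Φ : (j : Fin M) → (Fin M → ℝ) → Set ℝ)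
    (hΦ : ∀ j, IsCompact {p : (Fin M → ℝ) × ℝ | p.1 ∈ Set.Icc a b ∧ p.2 ∈ Φ j p.1})
    (hsub : ∀ j, ∀ y ∈ Set.Icc a b, Φ j y ⊆ Set.Icc (a j) (b j))
    (hne : ∀ j, ∀ y ∈ Set.Icc a b, (Φ j y).Nonempty)
    (hord : ∀ j, ∀ y ∈ Set.Icc a b, (Φ j y).OrdConnected) :
    ∃ y ∈ Set.Icc a b, ∀ j, y j ∈ Φ j y := by
  have hclosed : ∀ j, ∀ S : Set ((Fin M → ℝ) × ℝ), IsClosed S →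
      IsClosed {y | y ∈ Set.Icc a b ∧ ∃ z ∈ Φ j y, (y, z) ∈ S} := fun j S hS => by
    convert (((hΦ j).inter_right hS).image continuous_fst).isClosed using 1
    ext y
    simp [and_assoc]
  obtain ⟨y, hy, hmem⟩ := exists_mem_inter_of_faces hab
    (fun j => hclosed j {p | p.1 j ≤ p.2} (isClosed_le (by fun_prop) (by fun_prop)))
    (fun j => hclosed j {p | p.2 ≤ p.1 j} (isClosed_le (by fun_prop) (by fun_prop)))
    (fun j y hy => by
      obtain ⟨z, hz⟩ := hne j y hy
      exact (le_total (y j) z).imp (fun h => ⟨hy, z, hz, h⟩) fun h => ⟨hy, z, hz, h⟩)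
    (fun j y hy hya => by
      obtain ⟨z, hz⟩ := hne j y hy
      exact ⟨hy, z, hz, hya.trans_le (hsub j y hy hz).1⟩)
    (fun j y hy hyb => by
      obtain ⟨z, hz⟩ := hne j y hy
      exact ⟨hy, z, hz, (hsub j y hy hz).2.trans_eq hyb.symm⟩)
  refine ⟨y, hy, fun j => ?_⟩
  obtain ⟨⟨-, z, hz, hyz⟩, -, z', hz', hzy⟩ := hmem j
  exact (hord j y hy).out hz' hz ⟨hzy, hyz⟩

end FixedPoint

section BestResponse

lemma convex_setOf_isMaxOn {𝕜 F β : Type*} [Semiring 𝕜] [PartialOrder 𝕜] [AddCommMonoid F]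
    [SMul 𝕜 F] [Preorder β] {s : Set F} {f : F → β} (hf : QuasiconcaveOn 𝕜 s f) :
    Convex 𝕜 {z ∈ s | IsMaxOn f s z} := by
  intro x hx z hz t₁ t₂ ht₁ ht₂ ht
  have h := hf (f x) ⟨hx.1, le_rfl⟩ ⟨hz.1, hz.2 hx.1⟩ ht₁ ht₂ ht
  exact ⟨h.1, fun w hw => (hx.2 hw).trans h.2⟩

variable {ι β : Type*} [DecidableEq ι] {E : ι → Type*} [LinearOrder β]

/-- The best responses of player `j`, with payoff `u` and action set `A j`, to the actions `y i` of
the other players `i ≠ j`; the value `y j` is irrelevant. -/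
def bestResponses (A : ∀ i, Set (E i)) (u : (∀ i, E i) → β) (j : ι) (y : ∀ i, E i) : Set (E j) :=
  {z ∈ A j | IsMaxOn (fun w => u (Function.update y j w)) (A j) z}

variable [∀ i, TopologicalSpace (E i)] [TopologicalSpace β] {A : ∀ i, Set (E i)}
  {u : (∀ i, E i) → β}

lemma continuousOn_comp_update {B : Type*} [TopologicalSpace B]
    {g : (∀ i, E i) → B} (hg : ContinuousOn g (Set.univ.pi A)) (j : ι) :
    ContinuousOn (fun p : (∀ i, E i) × E j => g (Function.update p.1 j p.2))
      (Set.univ.pi A ×ˢ A j) :=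
  hg.comp (continuous_fst.update j continuous_snd).continuousOn fun _ hp =>
    (Set.update_mem_pi_iff_of_mem hp.1).2 fun _ => hp.2

lemma bestResponses_nonempty [ClosedIciTopology β] (hu : ContinuousOn u (Set.univ.pi A))
    {j : ι} (hA : IsCompact (A j)) {y : ∀ i, E i} (hy : y ∈ Set.univ.pi A) :
    (bestResponses A u j y).Nonempty :=
  hA.exists_isMaxOn ⟨y j, hy j trivial⟩ <|
    (continuousOn_comp_update hu j).comp (continuous_const.prodMk continuous_id).continuousOn
      fun _ hz => ⟨hy, hz⟩

lemma isCompact_graph_bestResponses [OrderClosedTopology β] [∀ i, T2Space (E i)]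
    (hA : ∀ i, IsCompact (A i))
    (hu : ContinuousOn u (Set.univ.pi A)) (j : ι) :
    IsCompact {p : (∀ i, E i) × E j | p.1 ∈ Set.univ.pi A ∧ p.2 ∈ bestResponses A u j p.1} := by
  have hdomain : IsCompact (Set.univ.pi A ×ˢ A j) := (isCompact_univ_pi hA).prod (hA j)
  have hgraph : {p : (∀ i, E i) × E j | p.1 ∈ Set.univ.pi A ∧ p.2 ∈ bestResponses A u j p.1} =
      (Set.univ.pi A ×ˢ A j) ∩ ⋂ w ∈ A j, {p ∈ Set.univ.pi A ×ˢ A j |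
        u (Function.update p.1 j w) ≤ u (Function.update p.1 j p.2)} := by
    ext p
    simp only [bestResponses, isMaxOn_iff, Set.mem_ofPred_eq, Set.mem_inter_iff, Set.mem_prod,
      Set.mem_iInter]
    grind
  rw [hgraph]
  refine hdomain.inter_right <| isClosed_biInter fun w hw => hdomain.isClosed.isClosed_le ?_
    (continuousOn_comp_update hu j)
  exact (continuousOn_comp_update hu j).comp (continuous_fst.prodMk continuous_const).continuousOn
    fun _ hp => ⟨hp.1, hw⟩

end BestResponse

/-- Existence of a pure Nash equilibrium for quasiconcave games with
one-dimensional compact interval action sets (Debreu–Glicksberg–Fan). Each player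
`j` has action set `[a j, b j]`, a payoff `J j` continuous on the product of the
action sets, and, for every fixed profile of the other players' actions, the map
`z ↦ J j (Function.update y j z)` is quasiconcave on `[a j, b j]` (all its
superlevel sets are convex). Then a pure Nash equilibrium exists. -/
theorem quasiconcave_game_has_pure_nash_equilibrium
    (M : ℕ) (hM : 1 ≤ M) (a b : Fin M → ℝ) (hab : ∀ j, a j ≤ b j)
    (K : Set (Fin M → ℝ))
    (hK : K = Set.pi Set.univ fun j => Set.Icc (a j) (b j))
    (J : Fin M → (Fin M → ℝ) → ℝ)
    (hJcont : ∀ j, ContinuousOn (J j) K)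
    (hqc : ∀ j, ∀ y ∈ K, ∀ t : ℝ,
      Convex ℝ {z ∈ Set.Icc (a j) (b j) | t ≤ J j (Function.update y j z)}) :
    ∃ ystar ∈ K, ∀ j, ∀ z ∈ Set.Icc (a j) (b j),
      J j (Function.update ystar j z) ≤ J j ystar := by
  subst hK
  have hbox := Set.pi_univ_Icc a b
  obtain ⟨y, hy, hbest⟩ := exists_mem_of_ordConnected hab
    (fun j => bestResponses (fun i => Set.Icc (a i) (b i)) (J j) j)
    (fun j => hbox ▸ isCompact_graph_bestResponses (fun _ => isCompact_Icc) (hJcont j) j)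
    (fun j y _ z hz => hz.1)
    (fun j y hy => bestResponses_nonempty (hJcont j) isCompact_Icc (hbox ▸ hy))
    (fun j y hy => (convex_setOf_isMaxOn (hqc j y (hbox ▸ hy))).ordConnected)
  refine ⟨y, hbox ▸ hy, fun j z hz => ?_⟩
  simpa using (hbest j).2 hz
end

section
/- Let α ≥ 0 and N ≥ 1. For i = 1,…,N let U_i : ℝ → ℝ be concave and differentiable. Let p, p̂ ∈ ℝ with p ≤ p̂, and let x, x̂ ∈ ℝ^N with x_i ≥ 0 and x̂_i ≥ 0 for all i and ∑_i x_i < ∑_i x̂_i. Assume positive surpluses: U_i(x_i) − p·x_i > 0 and U_i(x̂_i) − p̂·x̂_i > 0 for all i. Suppose there exist λ, λ̂ ∈ ℝ such that for all i, (U_i'(x_i) − p) / (U_i(x_i) − p·x_i)^α = λ and (U_i'(x̂_i) − p̂) / (U_i(x̂_i) − p̂·x̂_i)^α = λ̂. Then λ̂ ≥ 0 implies λ ≥ 0. -/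
theorem le_of_concaveOn_of_hasDerivWithinAt {S : Set ℝ} {f : ℝ → ℝ} {a b fa fb : ℝ}
    (hf : ConcaveOn ℝ S f) (ha : a ∈ S) (hb : b ∈ S) (hab : a < b)
    (hfa : HasDerivWithinAt f fa S a) (hfb : HasDerivWithinAt f fb S b) :
    fb ≤ fa :=
  calc
    fb ≤ slope f a b := hf.le_slope_of_hasDerivWithinAt ha hb hab hfb
    _ ≤ fa := hf.slope_le_of_hasDerivWithinAt ha hb hab hfa

theorem sub_div_rpow_nonneg_iff {s : ℝ} (hs : 0 < s) (α m p : ℝ) :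
    0 ≤ (m - p) / s ^ α ↔ p ≤ m := by
  rw [le_div_iff₀ (Real.rpow_pos_of_pos hs α), zero_mul, sub_nonneg]

theorem budget_multiplier_sign_monotone_general {ι : Type*} [Fintype ι] (α : ℝ)
    (S : ι → Set ℝ) (U : ι → ℝ → ℝ) (hU : ∀ i, ConcaveOn ℝ (S i) (U i))
    (p phat : ℝ) (hp : p ≤ phat)
    (x xhat : ι → ℝ) (hx : ∀ i, x i ∈ S i) (hxhat : ∀ i, xhat i ∈ S i)
    (hsum : ∑ i, x i < ∑ i, xhat i)
    (u uhat : ι → ℝ)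
    (hu : ∀ i, HasDerivWithinAt (U i) (u i) (S i) (x i))
    (huhat : ∀ i, HasDerivWithinAt (U i) (uhat i) (S i) (xhat i))
    (hs : ∀ i, 0 < U i (x i) - p * x i)
    (hshat : ∀ i, 0 < U i (xhat i) - phat * xhat i)
    (lam lamhat : ℝ)
    (hlam : ∀ i, (u i - p) / (U i (x i) - p * x i) ^ α = lam)
    (hlamhat : ∀ i, (uhat i - phat) / (U i (xhat i) - phat * xhat i) ^ α = lamhat)
    (hpos : 0 ≤ lamhat) :
    0 ≤ lam := by
  obtain ⟨i, -, hi⟩ := Finset.exists_lt_of_sum_lt hsum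
  rw [← hlamhat i, sub_div_rpow_nonneg_iff (hshat i)] at hpos
  rw [← hlam i, sub_div_rpow_nonneg_iff (hs i)]
  calc
    p ≤ phat := hp
    _ ≤ uhat i := hpos
    _ ≤ u i :=
      le_of_concaveOn_of_hasDerivWithinAt (hU i) (hx i) (hxhat i) hi (hu i) (huhat i)

/-- Comparative statics of the budget multiplier in the α-fair
allocation problem. If the first-order conditions hold at `(x, p)` with
multiplier `λ` and at `(x̂, p̂)` with multiplier `λ̂`, where `p ≤ p̂`, the total
allocation is strictly larger at `x̂`, and all surpluses are positive, then
`λ̂ ≥ 0` implies `λ ≥ 0`. The power is the real power (rpow). -/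
theorem budget_multiplier_sign_monotone
    (α : ℝ) (hα : 0 ≤ α) (N : ℕ) (hN : 1 ≤ N)
    (U : Fin N → ℝ → ℝ)
    (hUconc : ∀ i, ConcaveOn ℝ Set.univ (U i))
    (hUdiff : ∀ i, Differentiable ℝ (U i))
    (p phat : ℝ) (hp : p ≤ phat)
    (x xhat : Fin N → ℝ)
    (hx : ∀ i, 0 ≤ x i) (hxhat : ∀ i, 0 ≤ xhat i)
    (hsum : ∑ i, x i < ∑ i, xhat i)
    (hs : ∀ i, 0 < U i (x i) - p * x i)
    (hshat : ∀ i, 0 < U i (xhat i) - phat * xhat i)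
    (lam lamhat : ℝ)
    (hlam : ∀ i, (deriv (U i) (x i) - p) / (U i (x i) - p * x i) ^ α = lam)
    (hlamhat : ∀ i,
      (deriv (U i) (xhat i) - phat) / (U i (xhat i) - phat * xhat i) ^ α = lamhat)
    (hpos : 0 ≤ lamhat) :
    0 ≤ lam :=
  budget_multiplier_sign_monotone_general α (fun _ ↦ Set.univ) U hUconc p phat hp x xhat
    (fun _ ↦ Set.mem_univ _) (fun _ ↦ Set.mem_univ _) hsum _ _
    (fun i ↦ (hUdiff i _).hasDerivAt.hasDerivWithinAt)
    (fun i ↦ (hUdiff i _).hasDerivAt.hasDerivWithinAt)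
    hs hshat lam lamhat hlam hlamhat hpos
end
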